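/- arXiv:1107.0124 — 2 statements merged into one kernel-verified Lean document; each statement's English description precedes it below -/
import Mathlib

section
/- Let d ≥ 1, let I be a metric space, let S : I → Matrix d d ℂ be continuous, and let Λ ⊆ Σ_I^+ be a nonempty compact θ_+-invariant subset. Then ρ(S|Λ) = max_{i(·)∈Λ} limsup_{n→∞} ‖S_{i_n}···S_{i_1}‖^{1/n} (the maximum is attained), and moreover there exist a switching signal i(·) ∈ Λ and a vector x₀ ∈ ℂ^d with ‖x₀‖ = 1 such that ρ(S|Λ) = limsup_{n→∞} ‖S_{i_n}···S_{i_1} x₀‖^{1/n}. -/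
open Filter Topology MeasureTheory

/-- Operator norm on `d × d` complex matrices induced by the Euclidean norm on `ℂ^d`. -/
noncomputable def opNorm {d : ℕ} (A : Matrix (Fin d) (Fin d) ℂ) : ℝ :=
  ‖Matrix.toEuclideanCLM (𝕜 := ℂ) A‖

/-- Spectral radius of a complex matrix, as a real number. -/
noncomputable def specRad {d : ℕ} (A : Matrix (Fin d) (Fin d) ℂ) : ℝ :=
  (spectralRadius ℂ A).toReal

/-- `prodS S x n = S_{i_n} ⋯ S_{i_1}` where `i_k = x (k-1)`. -/
noncomputable def prodS {d : ℕ} {I : Type*} (S : I → Matrix (Fin d) (Fin d) ℂ)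
    (x : ℕ → I) : ℕ → Matrix (Fin d) (Fin d) ℂ
  | 0 => 1
  | n + 1 => S (x n) * prodS S x n

/-- `Λ` is invariant under the one-sided shift `θ₊`. -/
def ShiftInv {I : Type*} (Λ : Set (ℕ → I)) : Prop :=
  ∀ x ∈ Λ, (fun n => x (n + 1)) ∈ Λ

/-- Generalized spectral radius of `S` restricted to `Λ`. -/
noncomputable def gsr {d : ℕ} {I : Type*} (S : I → Matrix (Fin d) (Fin d) ℂ)
    (Λ : Set (ℕ → I)) : ℝ :=
  Filter.limsup (fun n : ℕ => ⨆ x : Λ, specRad (prodS S x.1 n) ^ (1 / (n : ℝ))) Filter.atTop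


theorem exists_minimal_nat (u : ℕ → ℕ) : ∃ J, ∀ n, u J ≤ u n := by
  obtain ⟨J, hJ⟩ := Nat.sInf_mem (Set.range_nonempty u)
  exact ⟨J, fun n => hJ ▸ Nat.sInf_le ⟨n, rfl⟩⟩

theorem tri_false {K W X : Type*} [Field K] [AddCommGroup W] [Module K W] [FiniteDimensional K W]
    (h : ℕ → W) (ev : X → W →ₗ[K] K) (w : ℕ → X)
    (h1 : ∀ a, ev (w a) (h a) ≠ 0) (h2 : ∀ a b, a < b → ev (w b) (h a) = 0) : False := by
  classical
  have hn : ¬ LinearIndependent K h := by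
    intro hli
    have := hli.finite
    exact not_finite ℕ
  rw [not_linearIndependent_iff] at hn
  obtain ⟨s, g, hs, i, his, hgi⟩ := hn
  have hne : (s.filter (fun j => g j ≠ 0)).Nonempty := ⟨i, by simp [his, hgi]⟩
  set m := (s.filter (fun j => g j ≠ 0)).max' hne with hm
  have hmem := Finset.max'_mem _ hne
  rw [← hm, Finset.mem_filter] at hmem
  have := congrArg (ev (w m)) hs
  rw [map_sum, map_zero, Finset.sum_eq_single m] at this
  · simp only [map_smul, smul_eq_mul, mul_eq_zero] at this
    exact this.elim hmem.2 (h1 m)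
  · intro b hb hbm
    by_cases hg : g b = 0
    · simp [hg]
    · have : b ≤ m := Finset.le_max' _ _ (by simp [hb, hg])
      simp [h2 b m (lt_of_le_of_ne this hbm)]
  · intro h; exact absurd hmem.1 h

def facP {R : Type*} [Monoid R] (P : ℕ → R) (i : ℕ) : ℕ → R
  | 0 => 1
  | n + 1 => P (i + n) * facP P i n

theorem facP_add {R : Type*} [Monoid R] (P : ℕ → R) (i m n : ℕ) :
    facP P i (m + n) = facP P (i + m) n * facP P i m := by
  induction n with
  | zero => simp [facP]
  | succ n ih => rw [← add_assoc, facP, ih, facP, mul_assoc, add_assoc]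

/-- no infinite sequence with constant rank block products which are all nilpotent -/
theorem const_rank_false {K V : Type*} [Field K] [AddCommGroup V] [Module K V]
    [FiniteDimensional K V] (Q : ℕ → ℕ → Module.End K V) (k : ℕ) (hk : 1 ≤ k)
    (hr : ∀ a b, a < b → Module.finrank K (LinearMap.range (Q a b)) = k)
    (hQ : ∀ a b c, a < b → b < c → Q a c = Q b c * Q a b)
    (hnil : ∀ a b, a < b → IsNilpotent (Q a b)) : False := by
  let B : ∀ a, Module.Basis (Fin k) K (LinearMap.range (Q a (a+1))) := fun a =>
    Module.finBasisOfFinrankEq K _ (hr a (a+1) (Nat.lt_succ_self a))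
  let f : ℕ → MultilinearMap K (fun _ : Fin k => V) K := fun a =>
    ((B a).det.toMultilinearMap).compLinearMap (fun _ => (Q a (a+1)).rangeRestrict)
  let w : ℕ → (Fin k → V) := fun b i => (B b i : V)
  have hspan : ∀ b, Submodule.span K (Set.range (w b)) = LinearMap.range (Q b (b+1)) := by
    intro b
    have : Set.range (w b) = (LinearMap.range (Q b (b+1))).subtype '' Set.range (B b) := by
      rw [← Set.range_comp]; rfl
    rw [this, Submodule.span_image, (B b).span_eq, Submodule.map_top, Submodule.range_subtype]
  have hli : ∀ b, LinearIndependent K (w b) := fun b =>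
    (B b).linearIndependent.map' (LinearMap.range (Q b (b+1))).subtype (Submodule.ker_subtype _)
  -- nonvanishing criterion
  have crit : ∀ a b, f a (w b) ≠ 0 ↔ LinearIndependent K (fun i => Q a (a+1) (w b i)) := by
    intro a b
    have e1 : f a (w b) = (B a).det (fun i => (Q a (a+1)).rangeRestrict (w b i)) := rfl
    rw [e1, ← isUnit_iff_ne_zero, ← Module.Basis.is_basis_iff_det]
    constructor
    · rintro ⟨h, -⟩
      exact h.map' (LinearMap.range (Q a (a+1))).subtype (Submodule.ker_subtype _)
    · intro h
      have h' : LinearIndependent K (fun i => (Q a (a+1)).rangeRestrict (w b i)) :=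
        LinearIndependent.of_comp (LinearMap.range (Q a (a+1))).subtype h
      refine ⟨h', h'.span_eq_top_of_card_eq_finrank' ?_⟩
      rw [hr a (a+1) (Nat.lt_succ_self a), Fintype.card_fin]
  let ev : (Fin k → V) → MultilinearMap K (fun _ : Fin k => V) K →ₗ[K] K := fun v =>
    { toFun := fun g => g v, map_add' := fun _ _ => rfl, map_smul' := fun _ _ => rfl }
  refine tri_false (fun a => f (a+1)) ev w ?_ ?_
  · intro a
    change f (a+1) (w a) ≠ 0
    rw [crit]
    refine (hli a).map ?_
    rw [hspan]
    have h3 := hr a (a+2) (by omega)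
    rw [hQ a (a+1) (a+2) (by omega) (by omega), Module.End.mul_eq_comp, LinearMap.range_comp] at h3
    have h4 := hr a (a+1) (by omega)
    have h5 := LinearMap.finrank_range_add_finrank_ker
      ((Q (a+1) (a+2)).domRestrict (LinearMap.range (Q a (a+1))))
    rw [LinearMap.range_domRestrict, h3, h4] at h5
    have h6 : LinearMap.ker ((Q (a+1) (a+2)).domRestrict (LinearMap.range (Q a (a+1)))) = ⊥ := by
      rw [← Submodule.finrank_eq_zero (R := K)]; omega
    rw [Submodule.disjoint_def]
    intro x hx hx'
    have : (⟨x, hx⟩ : LinearMap.range (Q a (a+1))) ∈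
      LinearMap.ker ((Q (a+1) (a+2)).domRestrict (LinearMap.range (Q a (a+1)))) := by
      simpa using hx'
    rw [h6] at this
    simpa using this
  · intro a b hab
    change f (a+1) (w b) = 0
    by_contra hne
    have hne := (crit (a+1) b).1 hne
    set T := Q (a+1) (b+1) with hT
    have hker : LinearMap.ker T = LinearMap.ker (Q (a+1) (a+2)) := by
      symm
      apply Submodule.eq_of_le_of_finrank_eq
      · rcases Nat.lt_or_ge (a+1) b with h | h
        · rw [hT, hQ (a+1) (a+2) (b+1) (by omega) (by omega), Module.End.mul_eq_comp]
          exact LinearMap.ker_le_ker_comp _ _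
        · have : b = a + 1 := by omega
          subst this; exact le_rfl
      · have h1 := LinearMap.finrank_range_add_finrank_ker T
        have h2 := LinearMap.finrank_range_add_finrank_ker (Q (a+1) (a+2))
        rw [hr _ _ (by omega)] at h1 h2
        omega
    have hran : LinearMap.range T ≤ LinearMap.range (Q b (b+1)) := by
      rcases Nat.lt_or_ge (a+1) b with h | h
      · rw [hT, hQ (a+1) b (b+1) h (by omega), Module.End.mul_eq_comp]
        exact LinearMap.range_comp_le_range _ _
      · have : b = a + 1 := by omega
        subst this; exact le_rfl
    have hinj : ∀ x ∈ LinearMap.range T, T x = 0 → x = 0 := by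
      intro x hx hx0
      have hx1 : Q (a+1) (a+2) x = 0 := by
        have : x ∈ LinearMap.ker T := hx0
        rw [hker] at this; exact this
      have hx2 := hran hx
      rw [← hspan] at hx2
      rw [Submodule.mem_span_range_iff_exists_fun] at hx2
      obtain ⟨c, rfl⟩ := hx2
      rw [map_sum] at hx1
      simp only [map_smul] at hx1
      have := Fintype.linearIndependent_iff.1 hne c hx1
      simp [this]
    obtain ⟨n, hn⟩ := hnil (a+1) (b+1) (by omega)
    have hp : ∀ x, T x ≠ 0 → ∀ n, (T^(n+1)) x ≠ 0 := by
      intro x hx n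
      induction n with
      | zero => simpa using hx
      | succ n ih =>
        intro h
        apply ih
        apply hinj
        · rw [pow_succ']; exact ⟨_, rfl⟩
        · rw [pow_succ'] at h; exact h
    have hT0 : T = 0 := by
      ext x
      by_contra hx
      apply hp x hx n
      rw [pow_succ, hT, hn]; simp
    have := hr (a+1) (b+1) (by omega)
    rw [← hT, hT0, LinearMap.range_zero, finrank_bot] at this
    omega

theorem nil_prod {K V : Type*} [Field K] [AddCommGroup V] [Module K V]
    [FiniteDimensional K V] (P : ℕ → Module.End K V)
    (hnil : ∀ i n, 1 ≤ n → IsNilpotent (facP P i n)) : ∃ n, facP P 0 n = 0 := by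
  by_contra! hne
  have hne' : ∀ i n, facP P i n ≠ 0 := by
    intro i n h
    apply hne (i+n)
    rw [facP_add, zero_add, h, zero_mul]
  let r : ℕ → ℕ → ℕ := fun i n => Module.finrank K (LinearMap.range (facP P i n))
  have hr1 : ∀ i n, 1 ≤ r i n := by
    intro i n
    rw [Nat.one_le_iff_ne_zero]
    intro h
    apply hne' i n
    rw [Submodule.finrank_eq_zero, LinearMap.range_eq_bot] at h
    exact h
  have hanti : ∀ i m n, r i (m+n) ≤ r i m := by
    intro i m n
    simp only [r]
    rw [facP_add, Module.End.mul_eq_comp, LinearMap.range_comp]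
    exact Submodule.finrank_map_le _ _
  have hsh : ∀ i m n, r i (m+n) ≤ r (i+m) n := by
    intro i m n
    simp only [r]
    rw [facP_add, Module.End.mul_eq_comp]
    exact Submodule.finrank_mono (LinearMap.range_comp_le_range _ _)
  have hJ : ∀ i, ∃ J, ∀ n, r i J ≤ r i n := by
    intro i
    exact exists_minimal_nat (r i)
  choose J hJ using hJ
  let k : ℕ → ℕ := fun i => r i (J i)
  have hkm : ∀ i m, k i ≤ k (i+m) := fun i m => (hJ i (m + J (i+m))).trans (hsh _ _ _)
  have hkb : ∀ i, k i ≤ Module.finrank K V := fun i => Submodule.finrank_le _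
  obtain ⟨i0, hi0⟩ : ∃ i0, ∀ i, k i ≤ k i0 := by
    obtain ⟨i0, h⟩ := exists_minimal_nat (fun i => Module.finrank K V - k i)
    refine ⟨i0, fun i => ?_⟩
    have h2 : Module.finrank K V - k i0 ≤ Module.finrank K V - k i := h i
    have := hkb i; have := hkb i0; omega
  have hkc : ∀ m, k (i0+m) = k i0 := fun m => le_antisymm (hi0 _) (hkm _ _)
  let t : ℕ → ℕ := fun m => Nat.rec i0 (fun _ p => p + (1 + J p)) m
  have ht : ∀ m, t (m+1) = t m + (1 + J (t m)) := fun m => rfl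
  have htm : StrictMono t := strictMono_nat_of_lt_succ (fun m => by rw [ht]; omega)
  have ht0 : ∀ m, i0 ≤ t m := fun m => htm.monotone (Nat.zero_le m)
  refine const_rank_false (fun a b => facP P (t a) (t b - t a)) (k i0) (hr1 _ _) ?_ ?_ ?_
  · intro a b hab
    have h1 : t (a+1) ≤ t b := htm.monotone hab
    rw [ht] at h1
    obtain ⟨c, hc⟩ := Nat.exists_eq_add_of_le h1
    obtain ⟨e, he⟩ := Nat.exists_eq_add_of_le (ht0 a)
    have h2 : t b - t a = J (t a) + (1 + c) := by omega
    change r (t a) (t b - t a) = k i0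
    rw [h2]
    apply le_antisymm
    · refine (hanti _ _ _).trans (hi0 _)
    · rw [← hkc e, ← he]; exact hJ _ _
  · intro a b c hab hbc
    have h1 := htm hab
    have h2 := htm hbc
    have h3 : t c - t a = (t b - t a) + (t c - t b) := by omega
    rw [h3, facP_add]
    congr 2; omega
  · intro a b hab
    have h1 := htm hab
    exact hnil _ _ (by omega)

theorem two_exp (δ : ℝ) (hδ : 0 < δ) : ∀ᶠ N : ℕ in (hyperfilter ℕ : Filter ℕ), 2 ≤ Real.exp (δ * N) := by
  apply Nat.hyperfilter_le_atTop
  have : Tendsto (fun N : ℕ => Real.exp (δ * N)) atTop atTop :=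
    Real.tendsto_exp_atTop.comp (tendsto_natCast_atTop_atTop.const_mul_atTop hδ)
  exact this.eventually_ge_atTop 2

def subexpRing : Subring (ℕ → ℂ) where
  carrier := {c | ∀ ε : ℝ, 0 < ε → ∀ᶠ N : ℕ in (hyperfilter ℕ : Filter ℕ), ‖c N‖ ≤ Real.exp (ε * N)}
  mul_mem' := by
    intro a b ha hb ε hε
    filter_upwards [ha (ε/2) (by positivity), hb (ε/2) (by positivity)] with N h1 h2
    have : ε * N = ε/2*N + ε/2*N := by ring
    rw [Pi.mul_apply, norm_mul, this, Real.exp_add]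
    gcongr
  one_mem' := by
    intro ε hε
    filter_upwards with N
    simp; positivity
  add_mem' := by
    intro a b ha hb ε hε
    filter_upwards [ha (ε/2) (by positivity), hb (ε/2) (by positivity),
      two_exp (ε/2) (by positivity)] with N h1 h2 h3
    have : ε * N = ε/2*N + ε/2*N := by ring
    rw [Pi.add_apply, this, Real.exp_add]
    refine (norm_add_le _ _).trans ?_
    nlinarith [Real.exp_pos (ε/2*N)]
  zero_mem' := by
    intro ε hε
    filter_upwards with N
    simp; positivity
  neg_mem' := by
    intro a ha ε hε
    simpa using ha ε hε

def expIdeal : Ideal subexpRing where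
  carrier := {c | ∃ δ : ℝ, 0 < δ ∧ ∀ᶠ N : ℕ in (hyperfilter ℕ : Filter ℕ), ‖c.1 N‖ ≤ Real.exp (-δ * N)}
  add_mem' := by
    rintro a b ⟨δ, hδ, ha⟩ ⟨δ', hδ', hb⟩
    have hm : 0 < min δ δ' := lt_min hδ hδ'
    refine ⟨min δ δ' / 2, by positivity, ?_⟩
    filter_upwards [ha, hb, two_exp (min δ δ' / 2) (by positivity)] with N h1 h2 h3
    set m := min δ δ'
    have e1 : Real.exp (-δ * N) ≤ Real.exp (-m * N) := by
      gcongr; exact min_le_left _ _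
    have e2 : Real.exp (-δ' * N) ≤ Real.exp (-m * N) := by
      gcongr; exact min_le_right _ _
    have e3 : Real.exp (-(m/2) * N) = Real.exp (-m*N) * Real.exp (m/2*N) := by
      rw [← Real.exp_add]; congr 1; ring
    rw [e3]
    refine (norm_add_le _ _).trans ?_
    nlinarith [Real.exp_pos (-m*N)]
  zero_mem' := ⟨1, one_pos, by filter_upwards with N; simp; positivity⟩
  smul_mem' := by
    rintro c a ⟨δ, hδ, ha⟩
    refine ⟨δ/2, by positivity, ?_⟩
    filter_upwards [ha, c.2 (δ/2) (by positivity)] with N h1 h2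
    have : -(δ/2) * N = δ/2*N + -δ * N := by ring
    rw [this, Real.exp_add]
    change ‖c.1 N * a.1 N‖ ≤ _
    rw [norm_mul]
    gcongr

instance expIdeal_prime : expIdeal.IsPrime where
  ne_top' := by
    rw [Ideal.ne_top_iff_one]
    rintro ⟨δ, hδ, h⟩
    obtain ⟨N, h1, h2⟩ := (h.and (two_exp δ hδ)).exists
    have h1 : 1 ≤ Real.exp (-δ * N) := by simpa using h1
    rw [neg_mul, Real.exp_neg] at h1
    have := inv_anti₀ two_pos h2
    norm_num at this
    linarith
  mem_or_mem' := by
    rintro a b ⟨δ, hδ, h⟩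
    by_contra! hab
    have key : ∀ c : subexpRing, c ∉ expIdeal →
        ∀ᶠ N : ℕ in (hyperfilter ℕ : Filter ℕ), Real.exp (-(δ/2) * N) < ‖c.1 N‖ := by
      intro c hc
      have : ¬ ∀ᶠ N : ℕ in (hyperfilter ℕ : Filter ℕ), ‖c.1 N‖ ≤ Real.exp (-(δ/2) * N) :=
        fun hh => hc ⟨δ/2, by positivity, hh⟩
      rw [← Ultrafilter.eventually_not] at this
      simpa using this
    obtain ⟨N, h1, h2, h3⟩ := (h.and ((key a hab.1).and (key b hab.2))).exists
    have e : -δ * N = -(δ/2) * N + -(δ/2) * N := by ring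
    have h1 : ‖a.1 N * b.1 N‖ ≤ _ := h1
    rw [norm_mul, e, Real.exp_add] at h1
    have := mul_lt_mul'' h2 h3 (Real.exp_pos _).le (Real.exp_pos _).le
    linarith

theorem exists_res : ∃ (κ : Type) (_ : Field κ) (f : subexpRing →+* κ),
    ∀ c, f c = 0 ↔ c ∈ expIdeal := by
  refine ⟨FractionRing (subexpRing ⧸ expIdeal), inferInstance,
    (algebraMap (subexpRing ⧸ expIdeal) (FractionRing (subexpRing ⧸ expIdeal))).comp
      (Ideal.Quotient.mk expIdeal), fun c => ?_⟩
  rw [RingHom.comp_apply, map_eq_zero_iff _ (IsFractionRing.injective _ _),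
    Ideal.Quotient.eq_zero_iff_mem]

theorem facP_map {R R' : Type*} [Monoid R] [Monoid R'] (φ : R →* R') (P : ℕ → R) (i n : ℕ) :
    facP (fun m => φ (P m)) i n = φ (facP P i n) := by
  induction n with
  | zero => simp [facP]
  | succ n ih => simp [facP, ih]

def evN (N : ℕ) : subexpRing →+* ℂ := (Pi.evalRingHom (fun _ : ℕ => ℂ) N).comp subexpRing.subtype

theorem nilp_of_spec {d : ℕ} {κ : Type} [Field κ] (resMap : subexpRing →+* κ)
    (resMap_eq_zero : ∀ c, resMap c = 0 ↔ c ∈ expIdeal) (M : Matrix (Fin d) (Fin d) subexpRing) (δ : ℝ) (hδ : 0 < δ)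
    (h : ∀ᶠ N : ℕ in atTop, ∀ z ∈ spectrum ℂ ((evN N).mapMatrix M), ‖z‖ ≤ Real.exp (-δ * N)) :
    IsNilpotent (resMap.mapMatrix M) := by
  have hch : (resMap.mapMatrix M).charpoly = Polynomial.X ^ d := by
    rw [RingHom.mapMatrix_apply, Matrix.charpoly_map]
    ext i
    rw [Polynomial.coeff_map, Polynomial.coeff_X_pow]
    have hdeg : M.charpoly.natDegree = d := by
      rw [Matrix.charpoly_natDegree_eq_dim, Fintype.card_fin]
    split_ifs with hi
    · have := M.charpoly_monic.coeff_natDegree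
      rw [hdeg] at this
      rw [hi, this, map_one]
    · rcases lt_or_gt_of_ne hi with hi | hi
      · rw [resMap_eq_zero]
        refine ⟨δ/2, by positivity, ?_⟩
        have hc : ∀ᶠ N : ℕ in (hyperfilter ℕ : Filter ℕ), (d.choose i : ℝ) ≤ Real.exp (δ/2 * N) := by
          apply Nat.hyperfilter_le_atTop
          have : Tendsto (fun N : ℕ => Real.exp (δ/2 * N)) atTop atTop :=
            Real.tendsto_exp_atTop.comp
              (tendsto_natCast_atTop_atTop.const_mul_atTop (by positivity))
          exact this.eventually_ge_atTop _
        filter_upwards [Nat.hyperfilter_le_atTop h, hc] with N h1 h2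
        have e1 : (M.charpoly.coeff i).1 N = ((evN N).mapMatrix M).charpoly.coeff i := by
          rw [RingHom.mapMatrix_apply, Matrix.charpoly_map, Polynomial.coeff_map]; rfl
        rw [e1]
        set A := (evN N).mapMatrix M
        have hAd : A.charpoly.natDegree = d := by
          rw [Matrix.charpoly_natDegree_eq_dim, Fintype.card_fin]
        have := Polynomial.coeff_le_of_roots_le (p := A.charpoly) (f := RingHom.id ℂ)
          (B := Real.exp (-δ * N)) i A.charpoly_monic (IsAlgClosed.splits _) (by
            intro z hz
            apply h1
            rw [Polynomial.map_id] at hz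
            rw [Matrix.mem_spectrum_iff_isRoot_charpoly]
            exact Polynomial.isRoot_of_mem_roots hz)
        rw [Polynomial.map_id, hAd] at this
        refine this.trans ?_
        have e2 : Real.exp (-(δ/2) * N) = Real.exp (-δ * N) * Real.exp (δ/2*N) := by
          rw [← Real.exp_add]; congr 1; ring
        rw [e2]
        gcongr
        refine pow_le_of_le_one (Real.exp_pos _).le ?_ (by omega)
        rw [Real.exp_le_one_iff]
        have : 0 ≤ δ * N := by positivity
        linarith
      · rw [Polynomial.coeff_eq_zero_of_natDegree_lt (by omega), map_zero]
  have := Matrix.aeval_self_charpoly (resMap.mapMatrix M)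
  rw [hch, map_pow, Polynomial.aeval_X] at this
  exact ⟨d, this⟩

theorem seq_lemma {d : ℕ} (B : ℕ → ℕ → Matrix (Fin d) (Fin d) ℂ)
    (h1 : ∀ m, ∀ ε : ℝ, 0 < ε → ∀ᶠ N : ℕ in atTop, ∀ i j, ‖B m N i j‖ ≤ Real.exp (ε * N))
    (δ : ℝ) (hδ : 0 < δ)
    (h2 : ∀ i n, 1 ≤ n → ∀ᶠ N : ℕ in atTop,
      ∀ z ∈ spectrum ℂ (facP (fun m => B m N) i n), ‖z‖ ≤ Real.exp (-δ * N)) :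
    ∃ n, ∀ i j, ∃ δ : ℝ, 0 < δ ∧ ∀ᶠ N : ℕ in (hyperfilter ℕ : Filter ℕ),
      ‖facP (fun m => B m N) 0 n i j‖ ≤ Real.exp (-δ * N) := by
  obtain ⟨κ, _, resMap, resMap_eq_zero⟩ := exists_res
  let Bt : ℕ → Matrix (Fin d) (Fin d) subexpRing := fun m => Matrix.of fun i j =>
    ⟨fun N => B m N i j, fun ε hε => Nat.hyperfilter_le_atTop ((h1 m ε hε).mono fun N h => h i j)⟩
  have hev : ∀ N i n, (evN N).mapMatrix (facP Bt i n) = facP (fun m => B m N) i n := by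
    intro N i n
    exact (facP_map ((evN N).mapMatrix : _ →+* Matrix (Fin d) (Fin d) ℂ).toMonoidHom Bt i n).symm
  have hP : ∀ i n, facP (fun m => Matrix.toLinAlgEquiv' (resMap.mapMatrix (Bt m))) i n =
      Matrix.toLinAlgEquiv' (resMap.mapMatrix (facP Bt i n)) := by
    intro i n
    have e1 := facP_map (resMap.mapMatrix : _ →+* Matrix (Fin d) (Fin d) κ).toMonoidHom Bt i n
    have e2 := facP_map ((Matrix.toLinAlgEquiv' : Matrix (Fin d) (Fin d) κ ≃ₐ[κ] _) :
      _ →* Module.End κ (Fin d → κ)) (fun m => resMap.mapMatrix (Bt m)) i n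
    refine e2.trans ?_
    exact congrArg _ e1
  obtain ⟨n, hn⟩ := nil_prod (fun m => Matrix.toLinAlgEquiv' (resMap.mapMatrix (Bt m))) (by
    intro i n hn
    rw [hP]
    refine IsNilpotent.map ?_ _
    apply nilp_of_spec resMap resMap_eq_zero _ δ hδ
    filter_upwards [h2 i n hn] with N h
    rw [hev]; exact h)
  refine ⟨n, fun i j => ?_⟩
  rw [hP, EmbeddingLike.map_eq_zero_iff] at hn
  have h3 : resMap (facP Bt 0 n i j) = 0 := congrFun (congrFun hn i) j
  rw [resMap_eq_zero] at h3
  obtain ⟨δ, hδ, h⟩ := h3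
  refine ⟨δ, hδ, h.mono fun N hN => ?_⟩
  rw [← hev N 0 n]
  exact hN

theorem opNorm_nonneg {d : ℕ} (A : Matrix (Fin d) (Fin d) ℂ) : 0 ≤ opNorm A := norm_nonneg _

theorem opNorm_mul {d : ℕ} (A B : Matrix (Fin d) (Fin d) ℂ) :
    opNorm (A * B) ≤ opNorm A * opNorm B := by
  unfold opNorm; rw [map_mul]; exact norm_mul_le _ _

theorem opNorm_one {d : ℕ} : opNorm (1 : Matrix (Fin d) (Fin d) ℂ) ≤ 1 := by
  unfold opNorm; rw [map_one]; exact ContinuousLinearMap.norm_id_le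

theorem opNorm_smul {d : ℕ} (c : ℂ) (A : Matrix (Fin d) (Fin d) ℂ) :
    opNorm (c • A) = ‖c‖ * opNorm A := by
  unfold opNorm; rw [map_smul, norm_smul]

theorem entry_le_opNorm {d : ℕ} (A : Matrix (Fin d) (Fin d) ℂ) (i j : Fin d) :
    ‖A i j‖ ≤ opNorm A := by
  have h1 := (Matrix.toEuclideanCLM (𝕜 := ℂ) A).le_opNorm (EuclideanSpace.single j 1)
  rw [EuclideanSpace.norm_single, norm_one, mul_one] at h1
  refine le_trans ?_ h1
  refine le_trans (le_of_eq ?_) (PiLp.norm_apply_le _ i)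
  rw [Matrix.ofLp_toEuclideanCLM]
  simp

theorem opNorm_le_sum {d : ℕ} (A : Matrix (Fin d) (Fin d) ℂ) :
    opNorm A ≤ ∑ i, ∑ j, ‖A i j‖ * opNorm (Matrix.single i j (1:ℂ)) := by
  conv_lhs => rw [Matrix.matrix_eq_sum_single A]
  unfold opNorm
  rw [map_sum]
  refine (norm_sum_le _ _).trans (Finset.sum_le_sum fun i _ => ?_)
  rw [map_sum]
  refine (norm_sum_le _ _).trans (Finset.sum_le_sum fun j _ => ?_)
  have : Matrix.single i j (A i j) = A i j • Matrix.single i j (1:ℂ) := by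
    rw [Matrix.smul_single, smul_eq_mul, mul_one]
  rw [this, map_smul, norm_smul]

theorem specRad_aux {d : ℕ} (hd : 1 ≤ d) (A : Matrix (Fin d) (Fin d) ℂ) :
    spectralRadius ℂ A ≤ ENNReal.ofReal (opNorm A) := by
  haveI : Nonempty (Fin d) := ⟨⟨0, hd⟩⟩
  have h := spectrum.spectralRadius_le_nnnorm (𝕜 := ℂ) (Matrix.toEuclideanCLM (n := Fin d) (𝕜 := ℂ) A)
  have e : spectralRadius ℂ (Matrix.toEuclideanCLM (n := Fin d) (𝕜 := ℂ) A) = spectralRadius ℂ A := by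
    unfold spectralRadius
    rw [AlgEquiv.spectrum_eq]
  rw [e] at h
  refine h.trans (le_of_eq ?_)
  rw [opNorm, ofReal_norm_eq_enorm]; rfl

theorem specRad_le {d : ℕ} (hd : 1 ≤ d) (A : Matrix (Fin d) (Fin d) ℂ) :
    specRad A ≤ opNorm A :=
  ENNReal.toReal_le_of_le_ofReal (opNorm_nonneg A) (specRad_aux hd A)

theorem le_specRad {d : ℕ} (hd : 1 ≤ d) (A : Matrix (Fin d) (Fin d) ℂ) (z : ℂ)
    (hz : z ∈ spectrum ℂ A) : ‖z‖ ≤ specRad A := by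
  have h1 : (‖z‖₊ : ENNReal) ≤ spectralRadius ℂ A :=
    le_iSup₂ (f := fun (k : ℂ) (_ : k ∈ spectrum ℂ A) => (‖k‖₊ : ENNReal)) z hz
  have h2 : spectralRadius ℂ A ≠ ⊤ := ne_top_of_le_ne_top ENNReal.ofReal_ne_top (specRad_aux hd A)
  have := ENNReal.toReal_mono h2 h1
  simpa [specRad] using this

theorem prodS_add {d : ℕ} {I : Type*} (S : I → Matrix (Fin d) (Fin d) ℂ) (x : ℕ → I) (m n : ℕ) :
    prodS S x (m + n) = prodS S (fun k => x (m + k)) n * prodS S x m := by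
  induction n with
  | zero => simp [prodS]
  | succ n ih => rw [← add_assoc, prodS, ih, prodS, mul_assoc]

theorem shift_mem {I : Type*} {Λ : Set (ℕ → I)} (hinv : ShiftInv Λ) {x : ℕ → I} (hx : x ∈ Λ)
    (m : ℕ) : (fun k => x (m + k)) ∈ Λ := by
  induction m with
  | zero => simpa using hx
  | succ m ih =>
    have := hinv _ ih
    convert this using 2
    congr 1; omega

theorem prodS_continuous {d : ℕ} {I : Type*} [TopologicalSpace I]
    (S : I → Matrix (Fin d) (Fin d) ℂ) (hS : Continuous S) (n : ℕ) :
    Continuous (fun x : ℕ → I => prodS S x n) := by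
  induction n with
  | zero => simpa [prodS] using continuous_const
  | succ n ih =>
    simp only [prodS]
    exact (hS.comp (continuous_apply n)).matrix_mul ih

theorem toCLM_continuous {d : ℕ} : Continuous
    (fun A : Matrix (Fin d) (Fin d) ℂ => Matrix.toEuclideanCLM (n := Fin d) (𝕜 := ℂ) A) :=
  LinearMap.continuous_of_finiteDimensional
    ((Matrix.toEuclideanCLM (n := Fin d) (𝕜 := ℂ)).toAlgEquiv.toLinearMap)

def growSet {d : ℕ} {I : Type*} (S : I → Matrix (Fin d) (Fin d) ℂ) (Λ : Set (ℕ → I)) : Set ℝ :=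
  {g | 0 < g ∧ ∃ C, ∀ n, ∀ x ∈ Λ, opNorm (prodS S x n) ≤ C * g ^ n}

noncomputable def jsr {d : ℕ} {I : Type*} (S : I → Matrix (Fin d) (Fin d) ℂ) (Λ : Set (ℕ → I)) : ℝ :=
  sInf (growSet S Λ)

theorem exists_bound {d : ℕ} {I : Type*} [MetricSpace I]
    (S : I → Matrix (Fin d) (Fin d) ℂ) (hS : Continuous S)
    (Λ : Set (ℕ → I)) (hcomp : IsCompact Λ) (hinv : ShiftInv Λ) :
    ∃ K : ℝ, 1 ≤ K ∧ ∀ n, ∀ x ∈ Λ, opNorm (prodS S x n) ≤ K ^ n := by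
  have hc : Continuous (fun x : ℕ → I => opNorm (S (x 0))) :=
    (toCLM_continuous.comp (hS.comp (continuous_apply 0))).norm
  obtain ⟨K, hK⟩ := (hcomp.image hc).bddAbove
  refine ⟨max K 1, le_max_right _ _, ?_⟩
  intro n
  induction n with
  | zero => intro x hx; simpa [prodS] using opNorm_one
  | succ n ih =>
    intro x hx
    rw [prodS, pow_succ']
    refine (opNorm_mul _ _).trans ?_
    have h1 : opNorm (S (x n)) ≤ max K 1 :=
      le_trans (hK ⟨_, shift_mem hinv hx n, by simp⟩) (le_max_left _ _)
    exact mul_le_mul h1 (ih x hx) (opNorm_nonneg _) (by positivity)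

theorem growSet_nonempty {d : ℕ} {I : Type*} [MetricSpace I]
    (S : I → Matrix (Fin d) (Fin d) ℂ) (hS : Continuous S)
    (Λ : Set (ℕ → I)) (hcomp : IsCompact Λ) (hinv : ShiftInv Λ) : (growSet S Λ).Nonempty := by
  obtain ⟨K, hK1, hK⟩ := exists_bound S hS Λ hcomp hinv
  exact ⟨K, by positivity, 1, by simpa using hK⟩

theorem growSet_bdd {d : ℕ} {I : Type*} 
    (S : I → Matrix (Fin d) (Fin d) ℂ) 
    (Λ : Set (ℕ → I)) : BddBelow (growSet S Λ) := ⟨0, fun _ h => h.1.le⟩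

theorem jsr_nonneg {d : ℕ} {I : Type*} 
    (S : I → Matrix (Fin d) (Fin d) ℂ) 
    (Λ : Set (ℕ → I)) : 0 ≤ jsr S Λ := Real.sInf_nonneg fun _ h => h.1.le

theorem jsr_upper {d : ℕ} {I : Type*} [MetricSpace I]
    (S : I → Matrix (Fin d) (Fin d) ℂ) (hS : Continuous S)
    (Λ : Set (ℕ → I)) (hcomp : IsCompact Λ) (hinv : ShiftInv Λ) (g : ℝ) (hg : jsr S Λ < g) :
    ∃ C, 1 ≤ C ∧ ∀ n, ∀ x ∈ Λ, opNorm (prodS S x n) ≤ C * g ^ n := by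
  obtain ⟨g', ⟨h0, C, hC⟩, hlt⟩ := exists_lt_of_csInf_lt (growSet_nonempty S hS Λ hcomp hinv) hg
  refine ⟨max C 1, le_max_right _ _, fun n x hx => (hC n x hx).trans ?_⟩
  gcongr
  exact le_max_left _ _

theorem jsr_step {d : ℕ} (hd : 1 ≤ d) {I : Type*} [MetricSpace I]
    (S : I → Matrix (Fin d) (Fin d) ℂ) (hS : Continuous S)
    (Λ : Set (ℕ → I)) (hcomp : IsCompact Λ) (hinv : ShiftInv Λ) (g : ℝ) (hg0 : 0 < g)
    (hg : g < jsr S Λ) (m : ℕ) :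
    ∃ y ∈ Λ, ∃ v : EuclideanSpace ℂ (Fin d), ‖v‖ = 1 ∧ ∀ n, n ≤ m →
      g ^ n ≤ ‖Matrix.toEuclideanCLM (𝕜 := ℂ) (prodS S y n) v‖ := by
  by_contra! hcon
  obtain ⟨K, hK1, hK⟩ := exists_bound S hS Λ hcomp hinv
  have hmem : g ∈ growSet S Λ := by
    refine ⟨hg0, (max (K / g) 1) ^ m, ?_⟩
    set C := (max (K / g) 1) ^ m with hCdef
    have hbase : 1 ≤ max (K/g) 1 := le_max_right _ _
    have key : ∀ n, ∀ x ∈ Λ, ∀ v : EuclideanSpace ℂ (Fin d),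
        ‖Matrix.toEuclideanCLM (𝕜 := ℂ) (prodS S x n) v‖ ≤ C * g ^ n * ‖v‖ := by
      intro n
      induction n using Nat.strong_induction_on with
      | _ n ih =>
      intro x hx v
      by_cases hv : v = 0
      · simp [hv]
      rcases le_or_gt n m with hnm | hnm
      · refine (ContinuousLinearMap.le_opNorm _ _).trans ?_
        gcongr
        refine (hK n x hx).trans ?_
        have e : K ^ n = (K/g)^n * g^n := by rw [← mul_pow, div_mul_cancel₀ _ hg0.ne']
        rw [e]
        gcongr
        calc (K/g)^n ≤ (max (K/g) 1)^n := by gcongr; exact le_max_left _ _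
          _ ≤ C := pow_le_pow_right₀ hbase hnm
      · have hvn : ‖v‖ ≠ 0 := norm_ne_zero_iff.2 hv
        obtain ⟨p, hpm, hp⟩ := hcon x hx (((‖v‖⁻¹ : ℝ) : ℂ) • v) (by
          rw [norm_smul]; simp [hvn])
        have hp' : ‖Matrix.toEuclideanCLM (𝕜 := ℂ) (prodS S x p) v‖ ≤ g ^ p * ‖v‖ := by
          rw [map_smul, norm_smul, Complex.norm_real, norm_inv, norm_norm, inv_mul_lt_iff₀ (by positivity)] at hp
          linarith
        have hp0 : p ≠ 0 := by
          rintro rfl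
          simp [prodS, hvn, norm_smul] at hp
        obtain ⟨q, rfl⟩ := Nat.exists_eq_add_of_le (hpm.trans hnm.le)
        rw [prodS_add, map_mul]
        have h1 := ih q (by omega) _ (shift_mem hinv hx p)
          (Matrix.toEuclideanCLM (𝕜 := ℂ) (prodS S x p) v)
        refine h1.trans ?_
        calc C * g^q * _ ≤ C * g^q * (g^p * ‖v‖) := by gcongr
          _ = _ := by rw [pow_add]; ring
    intro n x hx
    exact ContinuousLinearMap.opNorm_le_bound _ (by positivity) (key n x hx)
  exact absurd (csInf_le (growSet_bdd S Λ) hmem) (not_le.2 hg)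

theorem jsr_lower {d : ℕ} (hd : 1 ≤ d) {I : Type*} [MetricSpace I]
    (S : I → Matrix (Fin d) (Fin d) ℂ) (hS : Continuous S)
    (Λ : Set (ℕ → I)) (hne : Λ.Nonempty) (hcomp : IsCompact Λ) (hinv : ShiftInv Λ) :
    ∃ y ∈ Λ, ∃ v : EuclideanSpace ℂ (Fin d), ‖v‖ = 1 ∧ ∀ n,
      jsr S Λ ^ n ≤ ‖Matrix.toEuclideanCLM (𝕜 := ℂ) (prodS S y n) v‖ := by
  rcases (jsr_nonneg S Λ).eq_or_lt with h0 | h0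
  · obtain ⟨y, hy⟩ := hne
    refine ⟨y, hy, EuclideanSpace.single ⟨0, hd⟩ 1, by simp, fun n => ?_⟩
    rw [← h0]
    cases n with
    | zero => simp [prodS]
    | succ n => simp
  set ρ := jsr S Λ with hρ
  let u : ℕ → ℝ := fun m => ρ * (1 - 1 / ((m:ℝ) + 2))
  have hfr : ∀ m : ℕ, 1 / ((m:ℝ)+2) < 1 := fun m => by
    rw [div_lt_one (by positivity)]; have : (0:ℝ) ≤ m := by positivity
    linarith
  have hu0 : ∀ m, 0 < u m := fun m => mul_pos h0 (by linarith [hfr m])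
  have hu1 : ∀ m, u m < ρ := fun m => by
    have : 0 < 1 / ((m:ℝ)+2) := by positivity
    simp only [u]; nlinarith
  have hum : ∀ m, u m ≤ u (m+1) := fun m => by
    simp only [u]; gcongr; push_cast; linarith
  have humono : Monotone u := monotone_nat_of_le_succ hum
  have hut : Tendsto u atTop (𝓝 ρ) := by
    have h1 : Tendsto (fun m : ℕ => 1 / ((m:ℝ)+2)) atTop (𝓝 0) := by
      have := (tendsto_one_div_add_atTop_nhds_zero_nat (𝕜 := ℝ)).comp (tendsto_add_atTop_nat 1)
      refine this.congr fun m => ?_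
      simp; ring
    have := (h1.const_sub 1).const_mul ρ
    simpa [u] using this
  let E : ℕ → Set ((ℕ → I) × EuclideanSpace ℂ (Fin d)) := fun m =>
    (Λ ×ˢ Metric.sphere 0 1) ∩ ⋂ n, ⋂ (_ : n ≤ m),
      {p | u m ^ n ≤ ‖Matrix.toEuclideanCLM (𝕜 := ℂ) (prodS S p.1 n) p.2‖}
  have hclosed : ∀ m, IsClosed (⋂ n, ⋂ (_ : n ≤ m),
      {p : (ℕ → I) × EuclideanSpace ℂ (Fin d) |
        u m ^ n ≤ ‖Matrix.toEuclideanCLM (𝕜 := ℂ) (prodS S p.1 n) p.2‖}) := by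
    intro m
    refine isClosed_iInter fun n => isClosed_iInter fun _ => isClosed_le continuous_const ?_
    exact (((toCLM_continuous.comp (prodS_continuous S hS n)).comp continuous_fst).clm_apply
      continuous_snd).norm
  have hK : IsCompact (Λ ×ˢ Metric.sphere (0 : EuclideanSpace ℂ (Fin d)) 1) :=
    hcomp.prod (isCompact_sphere _ _)
  have hEc : ∀ m, IsCompact (E m) := fun m => hK.inter_right (hclosed m)
  obtain ⟨p, hp⟩ := IsCompact.nonempty_iInter_of_sequence_nonempty_isCompact_isClosed E
    (by
      rintro m p ⟨h1, h2⟩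
      refine ⟨h1, ?_⟩
      simp only [Set.mem_iInter, Set.mem_setOf_eq] at h2 ⊢
      intro n hn
      exact (pow_le_pow_left₀ (hu0 m).le (hum m) n).trans (h2 n (by omega)))
    (by
      intro m
      obtain ⟨y, hy, v, hv, h⟩ := jsr_step hd S hS Λ hcomp hinv (u m) (hu0 m) (hu1 m) m
      refine ⟨(y, v), ⟨hy, by simpa using hv⟩, ?_⟩
      simp only [Set.mem_iInter, Set.mem_setOf_eq]
      exact h)
    (hEc 0) (fun m => (hEc m).isClosed)
  rw [Set.mem_iInter] at hp
  refine ⟨p.1, (hp 0).1.1, p.2, by simpa using (hp 0).1.2, fun n => ?_⟩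
  refine le_of_tendsto (hut.pow n) ?_
  filter_upwards [eventually_ge_atTop n] with m hm
  have := (hp m).2
  simp only [Set.mem_iInter, Set.mem_setOf_eq] at this
  exact this n hm

theorem facP_prodS {d : ℕ} {I : Type*} (S : I → Matrix (Fin d) (Fin d) ℂ) (y : ℕ → I) (c : ℂ)
    (N i n : ℕ) :
    facP (fun m => c • prodS S (fun k => y (m * N + k)) N) i n =
      c ^ n • prodS S (fun k => y (i * N + k)) (n * N) := by
  induction n with
  | zero => simp [facP, prodS]
  | succ n ih =>
    rw [facP, ih, add_mul n 1 N, one_mul, prodS_add, smul_mul_smul_comm, pow_succ']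
    congr 3
    funext k; congr 1; ring

theorem const_le_exp (C δ : ℝ) (hδ : 0 < δ) : ∀ᶠ N : ℕ in atTop, C ≤ Real.exp (δ * N) := by
  have : Tendsto (fun N : ℕ => Real.exp (δ * N)) atTop atTop :=
    Real.tendsto_exp_atTop.comp (tendsto_natCast_atTop_atTop.const_mul_atTop hδ)
  exact this.eventually_ge_atTop C

theorem berger_wang_aux {d : ℕ} (hd : 1 ≤ d) {I : Type*} [MetricSpace I]
    (S : I → Matrix (Fin d) (Fin d) ℂ) (hS : Continuous S)
    (Λ : Set (ℕ → I)) (hne : Λ.Nonempty) (hcomp : IsCompact Λ) (hinv : ShiftInv Λ)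
    (r : ℝ) (hr0 : 0 < r) (hr : r < jsr S Λ) (n0 : ℕ)
    (h : ∀ n, n0 ≤ n → ∀ x ∈ Λ, specRad (prodS S x n) ≤ r ^ n) : False := by
  obtain ⟨y, hy, v, hv, hlow⟩ := jsr_lower hd S hS Λ hne hcomp hinv
  set ρ := jsr S Λ with hρ
  have hρ0 : 0 < ρ := hr0.trans hr
  let B : ℕ → ℕ → Matrix (Fin d) (Fin d) ℂ := fun m N =>
    ((((ρ ^ N)⁻¹ : ℝ)) : ℂ) • prodS S (fun k => y (m * N + k)) N
  have hcn : ∀ N : ℕ, ‖((((ρ ^ N)⁻¹ : ℝ)) : ℂ)‖ = (ρ ^ N)⁻¹ := fun N => by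
    rw [Complex.norm_real, Real.norm_of_nonneg (by positivity)]
  have hdpos : 0 < -Real.log (r/ρ) := by
    rw [neg_pos]; exact Real.log_neg (by positivity) ((div_lt_one hρ0).2 hr)
  have hfac : ∀ N i n, facP (fun m => B m N) i n =
      ((((ρ ^ N)⁻¹ : ℝ)) : ℂ) ^ n • prodS S (fun k => y (i * N + k)) (n * N) := fun N i n =>
    facP_prodS S y _ N i n
  obtain ⟨n, hn⟩ := seq_lemma B (by
    intro m ε hε
    obtain ⟨C, hC1, hC⟩ := jsr_upper S hS Λ hcomp hinv (ρ * Real.exp (ε/2)) (by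
      have : 1 < Real.exp (ε/2) := Real.one_lt_exp_iff.2 (by positivity)
      rw [← hρ]; nlinarith)
    filter_upwards [const_le_exp C (ε/2) (by positivity)] with N hN i j
    refine (entry_le_opNorm _ i j).trans ?_
    simp only [B]
    rw [opNorm_smul, hcn, inv_mul_le_iff₀ (by positivity)]
    refine (hC N _ (shift_mem hinv hy _)).trans ?_
    have e : ε * N = ε/2*N + N * (ε/2) := by ring
    rw [e, Real.exp_add, mul_pow, ← Real.exp_nat_mul]
    calc C * (ρ ^ N * Real.exp (N * (ε/2)))
        ≤ Real.exp (ε/2*N) * (ρ ^ N * Real.exp (N * (ε/2))) := by gcongr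
      _ = _ := by ring) (-Real.log (r/ρ)) hdpos (by
    intro i n hn
    filter_upwards [eventually_ge_atTop n0] with N hN z hz
    rw [hfac] at hz
    have hc0 : ((((ρ ^ N)⁻¹ : ℝ)) : ℂ) ^ n ≠ 0 := by
      apply pow_ne_zero
      rw [← norm_ne_zero_iff, hcn]; positivity
    set c := ((((ρ ^ N)⁻¹ : ℝ)) : ℂ) ^ n with hc
    have hzz : z = (Units.mk0 c hc0) • (c⁻¹ * z) := by
      rw [Units.smul_def, Units.val_mk0, smul_eq_mul, mul_inv_cancel_left₀ hc0]
    have hz2 : c⁻¹ * z ∈ spectrum ℂ (prodS S (fun k => y (i * N + k)) (n * N)) := by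
      rw [hzz] at hz
      exact spectrum.smul_mem_smul_iff.1 hz
    have h1 := (le_specRad hd _ _ hz2).trans
      (h (n*N) (hN.trans (Nat.le_mul_of_pos_left N hn)) _ (shift_mem hinv hy _))
    rw [norm_mul, norm_inv, hc, norm_pow, hcn, inv_pow, inv_inv, ← pow_mul, mul_comm N n] at h1
    have h2 : ‖z‖ ≤ (r/ρ)^(n*N) := by
      rw [div_pow, le_div_iff₀ (by positivity)]; linarith
    refine h2.trans ?_
    rw [neg_neg, mul_comm (Real.log _), Real.exp_nat_mul, Real.exp_log (by positivity)]
    exact pow_le_pow_of_le_one (by positivity) ((div_lt_one hρ0).2 hr).le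
      (Nat.le_mul_of_pos_left N hn))
  choose δ hδ hn using hn
  have hge : ∀ N, 1 ≤ opNorm (facP (fun m => B m N) 0 n) := by
    intro N
    rw [hfac, opNorm_smul, norm_pow, hcn, inv_pow, ← pow_mul, mul_comm N n,
      le_inv_mul_iff₀ (by positivity), mul_one]
    have h1 := hlow (n*N)
    have h2 := (Matrix.toEuclideanCLM (𝕜 := ℂ) (prodS S y (n*N))).le_opNorm v
    rw [hv, mul_one] at h2
    have e : (fun k => y (0 * N + k)) = y := by funext k; simp
    rw [e]
    exact h1.trans h2
  have hlim : Tendsto (fun N : ℕ => ∑ i, ∑ j, Real.exp (-δ i j * N) *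
      opNorm (Matrix.single i j (1:ℂ))) (hyperfilter ℕ : Filter ℕ) (𝓝 (∑ i : Fin d, ∑ j : Fin d,
        0 * opNorm (Matrix.single i j (1:ℂ)))) := by
    refine tendsto_finset_sum _ fun i _ => tendsto_finset_sum _ fun j _ => ?_
    refine Tendsto.mul_const _ ?_
    refine Tendsto.mono_left ?_ Nat.hyperfilter_le_atTop
    refine Real.tendsto_exp_atBot.comp ?_
    exact tendsto_natCast_atTop_atTop.const_mul_atTop_of_neg (by linarith [hδ i j])
  simp only [zero_mul, Finset.sum_const_zero] at hlim
  have hev : ∀ᶠ N : ℕ in (hyperfilter ℕ : Filter ℕ), (1:ℝ) ≤ ∑ i, ∑ j, Real.exp (-δ i j * N) *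
      opNorm (Matrix.single i j (1:ℂ)) := by
    have hall : ∀ᶠ N : ℕ in (hyperfilter ℕ : Filter ℕ), ∀ i j,
        ‖facP (fun m => B m N) 0 n i j‖ ≤ Real.exp (-δ i j * N) := by
      rw [eventually_all]; intro i; rw [eventually_all]; intro j; exact hn i j
    filter_upwards [hall] with N hN
    refine (hge N).trans ((opNorm_le_sum _).trans ?_)
    refine Finset.sum_le_sum fun i _ => Finset.sum_le_sum fun j _ => ?_
    exact mul_le_mul_of_nonneg_right (hN i j) (opNorm_nonneg _)
  have := ge_of_tendsto hlim hev
  linarith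

theorem limsup_le_of_growth (a : ℕ → ℝ) (ρ : ℝ) (ha : ∀ n, 0 ≤ a n)
    (h : ∀ g, ρ < g → ∃ C, 1 ≤ C ∧ ∀ᶠ n in atTop, a n ≤ (C * g ^ n) ^ (1 / (n:ℝ))) (hρ : 0 ≤ ρ) :
    IsBoundedUnder (· ≤ ·) atTop a ∧ limsup a atTop ≤ ρ := by
  have key : ∀ g, ρ < g → ∀ᶠ n in atTop, a n ≤ g := by
    intro g hg
    set g' := (ρ + g)/2
    have hg' : ρ < g' := by simp only [g']; linarith
    have hg'g : g' < g := by simp only [g']; linarith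
    have hg'0 : 0 < g' := by linarith
    obtain ⟨C, hC, hev⟩ := h g' hg'
    have ht : Tendsto (fun n : ℕ => C ^ (1/(n:ℝ)) * g') atTop (𝓝 (C ^ (0:ℝ) * g')) := by
      refine Tendsto.mul_const _ ?_
      exact ((Real.continuous_const_rpow (by positivity : C ≠ 0)).tendsto 0).comp
        (tendsto_one_div_atTop_nhds_zero_nat (𝕜 := ℝ))
    rw [Real.rpow_zero, one_mul] at ht
    filter_upwards [hev, ht.eventually_le_const hg'g, eventually_ge_atTop 1] with n h1 h2 h3
    refine h1.trans (le_trans (le_of_eq ?_) h2)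
    rw [Real.mul_rpow (by positivity) (by positivity), one_div,
      Real.pow_rpow_inv_natCast hg'0.le (by omega)]
  have hb : IsBoundedUnder (· ≤ ·) atTop a := ⟨ρ+1, by simpa using key (ρ+1) (by linarith)⟩
  refine ⟨hb, le_of_forall_gt_imp_ge_of_dense fun g hg => ?_⟩
  exact limsup_le_of_le (isCoboundedUnder_le_of_le atTop (x := 0) ha) (key g hg)

theorem le_limsup_of_growth (a : ℕ → ℝ) (ρ : ℝ) (hρ : 0 ≤ ρ) (b : ℕ → ℝ)
    (hb : IsBoundedUnder (· ≤ ·) atTop a) (hab : ∀ n, a n = b n ^ (1 / (n:ℝ)))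
    (h : ∀ n, ρ ^ n ≤ b n) : ρ ≤ limsup a atTop := by
  refine le_limsup_of_frequently_le (Eventually.frequently ?_) hb
  filter_upwards [eventually_ge_atTop 1] with n hn
  rw [hab]
  calc ρ = (ρ^n) ^ (1/(n:ℝ)) := by rw [one_div, Real.pow_rpow_inv_natCast hρ (by omega)]
    _ ≤ _ := Real.rpow_le_rpow (by positivity) (h n) (by positivity)

theorem gsr_eq_jsr {d : ℕ} (hd : 1 ≤ d) {I : Type*} [MetricSpace I]
    (S : I → Matrix (Fin d) (Fin d) ℂ) (hS : Continuous S)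
    (Λ : Set (ℕ → I)) (hne : Λ.Nonempty) (hcomp : IsCompact Λ) (hinv : ShiftInv Λ) :
    gsr S Λ = jsr S Λ := by
  haveI : Nonempty Λ := hne.to_subtype
  have hs0 : ∀ A : Matrix (Fin d) (Fin d) ℂ, 0 ≤ specRad A := fun A => ENNReal.toReal_nonneg
  have hρ := jsr_nonneg S Λ
  have hup := limsup_le_of_growth
    (fun n : ℕ => ⨆ x : Λ, specRad (prodS S x.1 n) ^ (1 / (n : ℝ))) (jsr S Λ)
    (fun n => Real.iSup_nonneg fun x => Real.rpow_nonneg (hs0 _) _) (by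
      intro g hg
      obtain ⟨C, hC1, hC⟩ := jsr_upper S hS Λ hcomp hinv g hg
      refine ⟨C, hC1, Eventually.of_forall fun n => ciSup_le fun x => ?_⟩
      exact Real.rpow_le_rpow (hs0 _) ((specRad_le hd _).trans (hC n _ x.2)) (by positivity)) hρ
  refine le_antisymm hup.2 ?_
  by_contra! hlt
  obtain ⟨r, hr1, hr2⟩ := exists_between hlt
  have hev := eventually_lt_of_limsup_lt hr1 hup.1
  have hg0 : 0 ≤ gsr S Λ := by
    refine le_limsup_of_frequently_le (Frequently.of_forall fun n => ?_) hup.1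
    exact Real.iSup_nonneg fun x => Real.rpow_nonneg (hs0 _) _
  obtain ⟨n0, hn0⟩ := eventually_atTop.1 (hev.and (eventually_ge_atTop 1))
  obtain ⟨C, hC1, hC⟩ := jsr_upper S hS Λ hcomp hinv (jsr S Λ + 1) (by linarith)
  refine berger_wang_aux hd S hS Λ hne hcomp hinv r (by linarith) hr2 n0 ?_
  intro n hn x hx
  obtain ⟨h1, h2⟩ := hn0 n hn
  have hbdd : BddAbove (Set.range fun x : Λ => specRad (prodS S x.1 n) ^ (1 / (n : ℝ))) := by
    refine ⟨(C * (jsr S Λ + 1)^n) ^ (1/(n:ℝ)), ?_⟩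
    rintro _ ⟨x, rfl⟩
    exact Real.rpow_le_rpow (hs0 _) ((specRad_le hd _).trans (hC n _ x.2)) (by positivity)
  have h3 := (le_ciSup hbdd ⟨x, hx⟩).trans h1.le
  have h4 := pow_le_pow_left₀ (Real.rpow_nonneg (hs0 _) _) h3 n
  rwa [one_div, Real.rpow_inv_natCast_pow (hs0 _) (by omega)] at h4

/-- **Optimization of the spectral radius (Corollary 2.7).**
`ρ(S|Λ)` is the maximum over `i(·) ∈ Λ` of the exponential growth rate
`limsup ‖S_{i_n}⋯S_{i_1}‖^{1/n}`, and it is moreover attained by the Lyapunov exponent of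
some pair `(x₀, i(·))` with `x₀` a unit vector. -/
theorem gsr_attained_optimization {d : ℕ} (hd : 1 ≤ d) {I : Type*} [MetricSpace I]
    (S : I → Matrix (Fin d) (Fin d) ℂ) (hS : Continuous S)
    (Λ : Set (ℕ → I)) (hne : Λ.Nonempty) (hcomp : IsCompact Λ) (hinv : ShiftInv Λ) :
    (∃ x ∈ Λ, gsr S Λ =
        Filter.limsup (fun n : ℕ => opNorm (prodS S x n) ^ (1 / (n : ℝ))) Filter.atTop) ∧
      (∀ x ∈ Λ,
        Filter.limsup (fun n : ℕ => opNorm (prodS S x n) ^ (1 / (n : ℝ))) Filter.atTop ≤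
          gsr S Λ) ∧
      ∃ x ∈ Λ, ∃ x₀ : EuclideanSpace ℂ (Fin d), ‖x₀‖ = 1 ∧
        gsr S Λ = Filter.limsup
          (fun n : ℕ => ‖(Matrix.toEuclideanCLM (𝕜 := ℂ) (prodS S x n)) x₀‖ ^ (1 / (n : ℝ)))
          Filter.atTop := by
  have hρ := jsr_nonneg S Λ
  rw [gsr_eq_jsr hd S hS Λ hne hcomp hinv]
  have hup : ∀ x ∈ Λ, _ := fun x hx => limsup_le_of_growth
    (fun n : ℕ => opNorm (prodS S x n) ^ (1 / (n : ℝ))) (jsr S Λ)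
    (fun n => Real.rpow_nonneg (opNorm_nonneg _) _) (by
      intro g hg
      obtain ⟨C, hC1, hC⟩ := jsr_upper S hS Λ hcomp hinv g hg
      refine ⟨C, hC1, Eventually.of_forall fun n => ?_⟩
      exact Real.rpow_le_rpow (opNorm_nonneg _) (hC n x hx) (by positivity)) hρ
  obtain ⟨y, hy, v, hv, hlow⟩ := jsr_lower hd S hS Λ hne hcomp hinv
  have hle : ∀ n, ‖(Matrix.toEuclideanCLM (𝕜 := ℂ) (prodS S y n)) v‖ ≤ opNorm (prodS S y n) := by
    intro n
    have h2 := (Matrix.toEuclideanCLM (𝕜 := ℂ) (prodS S y n)).le_opNorm v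
    rwa [hv, mul_one] at h2
  refine ⟨⟨y, hy, ?_⟩, fun x hx => (hup x hx).2, y, hy, v, hv, ?_⟩
  · refine le_antisymm ?_ (hup y hy).2
    exact le_limsup_of_growth _ _ hρ _ (hup y hy).1 (fun n => rfl)
      (fun n => (hlow n).trans (hle n))
  · have hup2 := limsup_le_of_growth
      (fun n : ℕ => ‖(Matrix.toEuclideanCLM (𝕜 := ℂ) (prodS S y n)) v‖ ^ (1 / (n : ℝ))) (jsr S Λ)
      (fun n => Real.rpow_nonneg (norm_nonneg _) _) (by
        intro g hg
        obtain ⟨C, hC1, hC⟩ := jsr_upper S hS Λ hcomp hinv g hg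
        refine ⟨C, hC1, Eventually.of_forall fun n => ?_⟩
        exact Real.rpow_le_rpow (norm_nonneg _) ((hle n).trans (hC n y hy)) (by positivity)) hρ
    exact le_antisymm (le_limsup_of_growth _ _ hρ _ hup2.1 (fun n => rfl) hlow) hup2.2
end

section
/- Let d ≥ 1 and let {S_i}_{i∈I} be a bounded family of matrices in Matrix d d ℂ indexed by a nonempty set I. Then the generalized spectral radius satisfies ρ(S) = sup_{n≥1} sup_{w∈I^n} ρ(S_w)^{1/n}; that is, the limsup in the definition of ρ(S) equals the supremum over all n of the normalized spectral radii of products of length n. -/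
open Filter Topology MeasureTheory

theorem specRad_aux_s17 {d : ℕ} (A : Matrix (Fin d) (Fin d) ℂ) :
    spectralRadius ℂ (Matrix.toEuclideanCLM (𝕜 := ℂ) A) = spectralRadius ℂ A := by
  unfold spectralRadius
  rw [AlgEquiv.spectrum_eq (Matrix.toEuclideanCLM (n := Fin d) (𝕜 := ℂ)) A]

theorem specRad_le_opNorm {d : ℕ} (hd : 1 ≤ d) (A : Matrix (Fin d) (Fin d) ℂ) :
    spectralRadius ℂ A ≠ ⊤ ∧ specRad A ≤ opNorm A := by
  have : Nonempty (Fin d) := ⟨⟨0, hd⟩⟩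
  have h := spectrum.spectralRadius_le_nnnorm (𝕜 := ℂ) (Matrix.toEuclideanCLM (𝕜 := ℂ) A)
  rw [specRad_aux_s17] at h
  refine ⟨ne_top_of_le_ne_top ENNReal.coe_ne_top h, ?_⟩
  exact ENNReal.toReal_mono ENNReal.coe_ne_top h

theorem specRad_pow_le {d : ℕ} (hd : 1 ≤ d) (A : Matrix (Fin d) (Fin d) ℂ) (k : ℕ) :
    specRad A ^ k ≤ specRad (A ^ k) := by
  have : Nonempty (Fin d) := ⟨⟨0, hd⟩⟩
  obtain ⟨z, hz, hzr⟩ := spectrum.exists_nnnorm_eq_spectralRadius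
    (Matrix.toEuclideanCLM (𝕜 := ℂ) A)
  have h1 := spectrum.pow_mem_pow (Matrix.toEuclideanCLM (𝕜 := ℂ) A) k hz
  rw [← map_pow] at h1
  have h2 : ((‖z ^ k‖₊ : NNReal) : ENNReal) ≤
      spectralRadius ℂ (Matrix.toEuclideanCLM (𝕜 := ℂ) (A ^ k)) :=
    le_iSup₂_of_le (z ^ k) h1 le_rfl
  rw [specRad_aux_s17] at h2 hzr
  have h3 := ENNReal.toReal_mono (specRad_le_opNorm hd (A ^ k)).1 h2
  unfold specRad
  rw [← hzr]
  simpa using h3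

theorem opNorm_prodS_le {d : ℕ} (hd : 1 ≤ d) {I : Type*}
    (S : I → Matrix (Fin d) (Fin d) ℂ) (C : ℝ) (hC : 0 ≤ C)
    (h : ∀ i : I, opNorm (S i) ≤ C) (x : ℕ → I) (n : ℕ) :
    opNorm (prodS S x n) ≤ C ^ n := by
  have : Nonempty (Fin d) := ⟨⟨0, hd⟩⟩
  induction n with
  | zero => simp [opNorm, prodS]
  | succ n ih =>
    have : opNorm (prodS S x (n+1)) ≤ opNorm (S (x n)) * opNorm (prodS S x n) := by
      unfold opNorm
      rw [prodS, map_mul]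
      exact norm_mul_le _ _
    rw [pow_succ']
    exact this.trans (mul_le_mul (h _) ih (norm_nonneg _) hC)

theorem prodS_periodic {d : ℕ} {I : Type*}
    (S : I → Matrix (Fin d) (Fin d) ℂ) (x : ℕ → I) (p k j : ℕ) (hj : j ≤ p) :
    prodS S (fun i => x (i % p)) (p * k + j) = prodS S x j * prodS S x p ^ k := by
  induction k generalizing j with
  | zero =>
    induction j with
    | zero => simp [prodS]
    | succ j ih =>
      have := ih (by omega)
      simp only [mul_zero, zero_add, pow_zero, mul_one] at this ⊢
      rw [prodS, this, prodS, Nat.mod_eq_of_lt (by omega)]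
  | succ k ihk =>
    induction j with
    | zero =>
      have := ihk p le_rfl
      rw [Nat.mul_succ, add_zero, this, pow_succ']
      simp [prodS]
    | succ j ih =>
      have := ih (by omega)
      rw [← add_assoc, prodS, this, prodS, Nat.mul_add_mod, Nat.mod_eq_of_lt (by omega),
        mul_assoc]

theorem gsr_eq_iSup {d : ℕ} (hd : 1 ≤ d) {I : Type*} [Nonempty I]
    (S : I → Matrix (Fin d) (Fin d) ℂ)
    (hbdd : ∃ C : ℝ, ∀ i : I, opNorm (S i) ≤ C) :
    Filter.limsup
        (fun n : ℕ => ⨆ x : ℕ → I, specRad (prodS S x n) ^ (1 / (n : ℝ))) Filter.atTop =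
      ⨆ n : ℕ, ⨆ x : ℕ → I, specRad (prodS S x (n + 1)) ^ (1 / (n + 1 : ℝ)) := by
  obtain ⟨C, hC⟩ := hbdd
  have hC0 : 0 ≤ C := (norm_nonneg _).trans (hC (Classical.arbitrary I))
  have hnn : ∀ A : Matrix (Fin d) (Fin d) ℂ, 0 ≤ specRad A := fun A => ENNReal.toReal_nonneg
  have key : ∀ (n : ℕ) (x : ℕ → I), specRad (prodS S x (n+1)) ^ (1 / ((n + 1 : ℕ) : ℝ)) ≤ C := by
    intro n x
    have h1 := ((specRad_le_opNorm hd _).2).trans (opNorm_prodS_le hd S C hC0 hC x (n+1))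
    have h2 := Real.rpow_le_rpow (hnn _) h1 (z := 1 / ((n + 1 : ℕ) : ℝ)) (by positivity)
    rwa [one_div, Real.pow_rpow_inv_natCast hC0 (by omega), ← one_div] at h2
  set a : ℕ → ℝ := fun n => ⨆ x : ℕ → I, specRad (prodS S x n) ^ (1 / (n : ℝ)) with ha
  have hR : (⨆ n : ℕ, ⨆ x : ℕ → I, specRad (prodS S x (n + 1)) ^ (1 / (n + 1 : ℝ)))
      = ⨆ n : ℕ, a (n+1) := by simp [ha]
  rw [hR]
  have haC : ∀ n, a (n+1) ≤ C := fun n => ciSup_le (key n)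
  have ha0 : ∀ n, 0 ≤ a n := fun n => Real.iSup_nonneg fun x => Real.rpow_nonneg (hnn _) _
  have hbd : BddAbove (Set.range fun n => a (n+1)) := ⟨C, by rintro _ ⟨n, rfl⟩; exact haC n⟩
  have hup : ∀ᶠ n in atTop, a n ≤ ⨆ n : ℕ, a (n+1) := by
    filter_upwards [eventually_ge_atTop 1] with n hn
    obtain ⟨m, rfl⟩ : ∃ m, n = m + 1 := ⟨n - 1, by omega⟩
    exact le_ciSup hbd m
  apply le_antisymm
  · exact limsup_le_of_le (isCoboundedUnder_le_of_le atTop (x := 0) ha0) hup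
  · refine ciSup_le fun n => ciSup_le fun x => ?_
    refine le_limsup_of_frequently_le ?_ ⟨_, by simpa using hup⟩
    rw [frequently_atTop]
    intro N
    refine ⟨(n+1) * (N+1), by nlinarith, ?_⟩
    have hp := prodS_periodic S x (n+1) (N+1) 0 (by omega)
    simp only [add_zero, prodS, one_mul] at hp
    obtain ⟨m, hm⟩ : ∃ m, (n+1) * (N+1) = m + 1 := ⟨(n+1)*(N+1) - 1, by
      have : 0 < (n+1)*(N+1) := by positivity
      omega⟩
    have hb : BddAbove (Set.range fun x : ℕ → I =>
        specRad (prodS S x ((n+1) * (N+1))) ^ (1 / (((n+1) * (N+1) : ℕ) : ℝ))) := by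
      rw [hm]
      exact ⟨C, by rintro _ ⟨x, rfl⟩; exact key m x⟩
    refine le_trans ?_ (le_ciSup hb (fun i => x (i % (n+1))))
    have hle := specRad_pow_le hd (prodS S x (n+1)) (N+1)
    have hp' : prodS S (fun i => x (i % (n+1))) ((n+1) * (N+1)) = prodS S x (n+1) ^ (N+1) := hp
    simp only [hp']
    refine le_trans (le_of_eq ?_) (Real.rpow_le_rpow (pow_nonneg (hnn _) _) hle (by positivity))
    rw [← Real.rpow_natCast, ← Real.rpow_mul (hnn _)]
    congr 1
    push_cast
    field_simp
end
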